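/- arXiv:1202.0085 — 5 statements merged into one kernel-verified Lean document; each statement's English description precedes it below -/
import Mathlib

section
/- Let K be a field and X* = A_1 × ... × A_n ⊂ K^n with d_i = |A_i|. The dimension of the cartesian code C_{X*}(d) over K equals Σ_{T ⊆ {1,...,n}} (−1)^{|T|} · C(n + d − Σ_{i∈T} d_i, d − Σ_{i∈T} d_i), where C(a,b) denotes the binomial coefficient (taken to be 0 when b < 0). -/
open Finset in
/-- Exponent vectors of total degree at most `e`. -/
noncomputable def expLE (n e : ℕ) : Finset (Fin n →₀ ℕ) :=
  (Finset.range (e + 1)).biUnion fun k => Finset.finsuppAntidiag Finset.univ k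

theorem mem_expLE {n e : ℕ} {m : Fin n →₀ ℕ} : m ∈ expLE n e ↔ ∑ i, m i ≤ e := by
  simp [expLE, Nat.lt_succ_iff]

theorem card_expLE (n e : ℕ) : (expLE n e).card = (n + e).choose e := by
  rw [expLE, Finset.card_biUnion]
  · simp only [Finset.card_finsuppAntidiag_nat_eq_multichoose, Finset.card_univ, Fintype.card_fin]
    rw [Nat.sum_range_multichoose, ← Nat.choose_symm_add, add_comm]
  · intro a _ b _ hab
    rw [Function.onFun, Finset.disjoint_left]
    intro m hm hm'
    simp only [Finset.mem_finsuppAntidiag] at hm hm'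
    exact hab (hm.1.symm.trans hm'.1)

theorem card_expLE_shift (n d : ℕ) (a : Fin n → ℕ) (T : Finset (Fin n)) :
    ((expLE n d).filter fun m => ∀ i ∈ T, a i ≤ m i).card =
      if ∑ i ∈ T, a i ≤ d then (n + d - ∑ i ∈ T, a i).choose (d - ∑ i ∈ T, a i) else 0 := by
  classical
  let b : Fin n →₀ ℕ := Finsupp.equivFunOnFinite.symm fun i => if i ∈ T then a i else 0
  have hb : ∀ i, b i = if i ∈ T then a i else 0 := fun i => rfl
  have hs : ∑ i, b i = ∑ i ∈ T, a i := by simp [hb]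
  have hle : ∀ m : Fin n →₀ ℕ, (∀ i ∈ T, a i ≤ m i) ↔ b ≤ m := by
    intro m
    rw [Finsupp.le_def]
    refine forall_congr' fun i => ?_
    rw [hb]
    split_ifs with h <;> simp [h]
  simp only [hle, ← hs]
  split_ifs with h
  · rw [Nat.add_sub_assoc h, ← card_expLE]
    symm
    refine Finset.card_bij (fun m _ => m + b) ?_ ?_ ?_
    · intro m hm
      rw [mem_expLE] at hm
      simp only [Finset.mem_filter, mem_expLE, Finsupp.add_apply, Finset.sum_add_distrib]
      exact ⟨by omega, le_add_self⟩
    · intro x _ y _ hxy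
      exact add_right_cancel hxy
    · intro m hm
      simp only [Finset.mem_filter, mem_expLE] at hm
      have e : m - b + b = m := tsub_add_cancel_of_le hm.2
      refine ⟨m - b, ?_, e⟩
      rw [mem_expLE]
      have := hm.1
      rw [← e] at this
      simp only [Finsupp.add_apply, Finset.sum_add_distrib] at this
      omega
  · rw [Finset.card_eq_zero, Finset.filter_eq_empty_iff]
    intro m hm hbm
    rw [mem_expLE] at hm
    exact h ((Finset.sum_le_sum fun i _ => hbm i).trans hm)

theorem card_std (n d : ℕ) (a : Fin n → ℕ) :
    (((expLE n d).filter fun m => ∀ i, m i < a i).card : ℤ) =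
      ∑ T : Finset (Fin n),
        if (∑ i ∈ T, a i) ≤ d then
          (-1 : ℤ) ^ T.card *
            ((n + d - ∑ i ∈ T, a i).choose (d - ∑ i ∈ T, a i) : ℤ)
        else 0 := by
  classical
  have h1 : ∀ m : Fin n →₀ ℕ, (if ∀ i, m i < a i then (1 : ℤ) else 0) =
      ∑ T : Finset (Fin n), (-1 : ℤ) ^ T.card * (if ∀ i ∈ T, a i ≤ m i then 1 else 0) := by
    intro m
    have := Finset.prod_sub (fun _ => (1 : ℤ)) (fun i => if a i ≤ m i then (1 : ℤ) else 0)
      (Finset.univ : Finset (Fin n))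
    simp only [Finset.prod_const_one, mul_one, Finset.powerset_univ] at this
    simp only [Finset.prod_ite_zero, Finset.prod_const_one] at this
    rw [← this]
    have h2 : ∀ i, ((1 : ℤ) - if a i ≤ m i then 1 else 0) = if m i < a i then 1 else 0 := by
      intro i
      by_cases h : a i ≤ m i
      · simp [h, not_lt.mpr h]
      · simp [h, not_le.mp h]
    simp only [h2, Finset.prod_ite_zero, Finset.prod_const_one, Finset.mem_univ, true_imp_iff]
  rw [Finset.card_filter]
  push_cast
  simp only [h1]
  rw [Finset.sum_comm]
  refine Finset.sum_congr rfl fun T _ => ?_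
  rw [← Finset.mul_sum]
  have := card_expLE_shift n d a T
  rw [Finset.card_filter] at this
  have h3 := congrArg (Nat.cast : ℕ → ℤ) this
  push_cast at h3
  rw [h3]
  split_ifs <;> simp

open MvPolynomial MonomialOrder in
theorem exists_reduced {K : Type*} [Field K] (n : ℕ) (A : Fin n → Finset K)
    (f : MvPolynomial (Fin n) K) :
    ∃ r : MvPolynomial (Fin n) K, r.totalDegree ≤ f.totalDegree ∧
      (∀ c ∈ r.support, ∀ i, c i < (A i).card) ∧
      ∀ x : Fin n → K, (∀ i, x i ∈ A i) → eval x r = eval x f := by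
  classical
  let P : Fin n → MvPolynomial (Fin n) K := fun i => ∏ r ∈ A i, (X i - C r)
  have hP : ∀ i, (degLex (σ := Fin n)).Monic (P i) := fun i =>
    Monic.prod (fun r _ => monic_X_sub_C _ i r)
  have hd : ∀ i, (degLex (σ := Fin n)).degree (P i) = Finsupp.single i (A i).card := by
    intro i
    simp only [P]
    rw [degree_prod_of_regular]
    · simp [Finset.sum_congr rfl (fun r _ => degree_X_sub_C _ i r)]
    · intro r _
      rw [monic_X_sub_C]
      exact isRegular_one
  obtain ⟨h, r, hf, hh, hr⟩ := (degLex (σ := Fin n)).div (b := P)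
    (fun i => by simp only [(hP i).leadingCoeff_eq_one, isUnit_one]) f
  have hrf : r = f - Finsupp.linearCombination _ P h := by rw [hf]; ring
  refine ⟨r, ?_, ?_, ?_⟩
  · rw [hrf]
    refine (totalDegree_sub _ _).trans (max_le le_rfl ?_)
    rw [Finsupp.linearCombination_apply, Finsupp.sum]
    refine totalDegree_finsetSum_le fun i _ => ?_
    rw [smul_eq_mul, mul_comm]
    exact degLex_totalDegree_monotone (hh i)
  · intro c hc i
    have := hr c hc i
    rw [hd, Finsupp.single_le_iff] at this
    exact not_le.mp this
  · intro x hx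
    rw [hrf, map_sub, sub_eq_self, Finsupp.linearCombination_apply, map_finsuppSum, Finsupp.sum]
    refine Finset.sum_eq_zero fun i _ => ?_
    rw [smul_eq_mul, map_mul]
    convert mul_zero _
    simp only [P, map_prod]
    exact Finset.prod_eq_zero (hx i) (by simp)


theorem stmt_11 {K : Type*} [Field K] [DecidableEq K] (n : ℕ) (A : Fin n → Finset K)
    (hA : ∀ i, (A i).Nonempty) (d : ℕ) :
    (Module.finrank K
        (Submodule.span K
          {v : ↥(Fintype.piFinset A) → K |
            ∃ f : MvPolynomial (Fin n) K, f.totalDegree ≤ d ∧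
              ∀ x : ↥(Fintype.piFinset A),
                v x = MvPolynomial.eval (x : Fin n → K) f}) : ℤ) =
      ∑ T : Finset (Fin n),
        if (∑ i ∈ T, (A i).card) ≤ d then
          (-1 : ℤ) ^ T.card *
            ((n + d - ∑ i ∈ T, (A i).card).choose (d - ∑ i ∈ T, (A i).card) : ℤ)
        else 0 := by
  classical
  rw [← card_std]
  congr 1
  set M := (expLE n d).filter fun m => ∀ i, m i < (A i).card with hM
  let V := MvPolynomial.restrictSupport K (M : Set (Fin n →₀ ℕ))
  let E : MvPolynomial (Fin n) K →ₗ[K] (↥(Fintype.piFinset A) → K) :=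
    LinearMap.pi fun x => (MvPolynomial.aeval (x : Fin n → K)).toLinearMap
  have hE : ∀ f x, E f x = MvPolynomial.eval (x : Fin n → K) f := by
    intro f x
    simp [E, MvPolynomial.aeval_eq_eval]
  have hV : ∀ f, f ∈ V ↔ ∀ c ∈ f.support, ∑ i, c i ≤ d ∧ ∀ i, c i < (A i).card := by
    intro f
    simp only [V]
    rw [MvPolynomial.mem_restrictSupport_iff]
    simp only [Set.subset_def, Finset.mem_coe, hM, Finset.mem_filter, mem_expLE]
  have htd : ∀ f : MvPolynomial (Fin n) K,
      f.totalDegree ≤ d ↔ ∀ c ∈ f.support, ∑ i, c i ≤ d := by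
    intro f
    rw [MvPolynomial.totalDegree, Finset.sup_le_iff]
    refine forall₂_congr fun c _ => ?_
    rw [Finsupp.sum_fintype _ _ (fun _ => rfl)]
  have hfin : Module.finrank K V = M.card := by
    rw [Module.finrank_eq_nat_card_basis (MvPolynomial.basisRestrictSupport K _)]
    simp
  have hinj : Function.Injective (E.domRestrict V) := by
    rw [injective_iff_map_eq_zero]
    rintro ⟨f, hf⟩ h0
    rw [Subtype.ext_iff]
    refine MvPolynomial.eq_zero_of_eval_zero_at_prod_finset f A ?_ ?_
    · intro i
      rw [MvPolynomial.degreeOf_eq_sup, Finset.sup_lt_iff (by simpa using hA i)]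
      intro c hc
      exact ((hV f).1 hf c hc).2 i
    · intro x hx
      have := congrFun h0 ⟨x, Fintype.mem_piFinset.2 hx⟩
      rw [LinearMap.domRestrict_apply, hE] at this
      exact this
  have hrange : Submodule.span K
      {v : ↥(Fintype.piFinset A) → K |
        ∃ f : MvPolynomial (Fin n) K, f.totalDegree ≤ d ∧
          ∀ x : ↥(Fintype.piFinset A), v x = MvPolynomial.eval (x : Fin n → K) f} =
      LinearMap.range (E.domRestrict V) := by
    apply le_antisymm
    · rw [Submodule.span_le]
      rintro v ⟨f, hf, hv⟩
      obtain ⟨r, hr1, hr2, hr3⟩ := exists_reduced n A f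
      refine ⟨⟨r, (hV r).2 fun c hc => ⟨(htd r).1 (hr1.trans hf) c hc, hr2 c hc⟩⟩, ?_⟩
      funext x
      rw [LinearMap.domRestrict_apply, hE, hv]
      exact hr3 _ (Fintype.mem_piFinset.1 x.2)
    · rintro _ ⟨⟨f, hf⟩, rfl⟩
      refine Submodule.subset_span ⟨f, (htd f).2 fun c hc => ((hV f).1 hf c hc).1, fun x => ?_⟩
      rw [LinearMap.domRestrict_apply, hE]
  rw [hrange, LinearMap.finrank_range_of_inj hinj, hfin]
end

section
/- Let K be a field, A_1,...,A_n finite nonempty subsets of K, and Y = {[(γ_1,...,γ_n,1)] : γ_i ∈ A_i} ⊂ P^n the projective closure of X* = A_1 × ... × A_n. Then the vanishing ideal I(Y) ⊂ K[t_1,...,t_n,u] equals the ideal generated by the homogeneous polynomials ∏_{γ ∈ A_i}(t_i − u γ) for i = 1,...,n; in particular I(Y) is a complete intersection of height n. -/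
open MvPolynomial in
lemma aux_scale {K S σ : Type*} [Field K] [CommRing S] [Algebra K S] (f : MvPolynomial σ K) (m : ℕ)
    (hf : f.IsHomogeneous m) (x : σ → K) (c : S) :
    aeval (fun i => c * algebraMap K S (x i)) f = c ^ m * algebraMap K S (eval x f) := by
  rw [aeval_def, eval₂_eq, eval_eq, map_sum, Finset.mul_sum]
  refine Finset.sum_congr rfl fun d hd => ?_
  have h : ∑ i ∈ d.support, d i = m := by
    have := hf (mem_support_iff.mp hd)
    rw [Finsupp.weight_apply] at this
    simpa [Finsupp.sum] using this
  simp only [mul_pow, Finset.prod_mul_distrib, Finset.prod_pow_eq_pow_sum, h, map_mul, map_prod,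
    map_pow]
  ring

open MvPolynomial in
lemma aux_mem {K : Type*} [Field K] (n : ℕ) (A : Fin n → Finset K)
    (hA : ∀ i, (A i).Nonempty) (f : MvPolynomial (Fin (n + 1)) K) (m : ℕ) (hf : f.IsHomogeneous m)
    (h0 : ∀ γ : Fin n → K, (∀ i, γ i ∈ A i) →
            MvPolynomial.eval (Fin.snoc γ (1 : K)) f = 0) :
    f ∈ Ideal.span (Set.range fun i : Fin n =>
        ∏ γ ∈ A i,
          (MvPolynomial.X i.castSucc -
            MvPolynomial.X (Fin.last n) * MvPolynomial.C γ)) := by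
  classical
  let φ : MvPolynomial (Fin (n+1)) K →ₐ[K] MvPolynomial (Fin n) (Polynomial K) :=
    aeval (Fin.snoc (α := fun _ => MvPolynomial (Fin n) (Polynomial K))
      (fun i => X i) (C Polynomial.X))
  let ψ : MvPolynomial (Fin n) (Polynomial K) →+* MvPolynomial (Fin (n+1)) K :=
    eval₂Hom ((Polynomial.aeval (X (Fin.last n)) :
      Polynomial K →ₐ[K] MvPolynomial (Fin (n+1)) K) : Polynomial K →+* MvPolynomial (Fin (n+1)) K)
      (fun i => X i.castSucc)
  have hψφ : ∀ g, ψ (φ g) = g := by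
    intro g
    have : (ψ.comp (φ : MvPolynomial (Fin (n+1)) K →+* _)) = RingHom.id _ := by
      apply MvPolynomial.ringHom_ext
      · intro r
        simp [φ, ψ, MvPolynomial.algebraMap_eq, IsScalarTower.algebraMap_apply K (Polynomial K) (MvPolynomial (Fin n) (Polynomial K))]
      · intro i
        refine Fin.lastCases ?_ (fun i => ?_) i <;> simp [φ, ψ]
    exact congrArg (fun F => F g) this
  let emb : K → Polynomial K := fun γ => Polynomial.X * Polynomial.C γ
  have hemb : Function.Injective emb := fun a b hab =>
    Polynomial.C_injective (mul_left_cancel₀ Polynomial.X_ne_zero hab)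
  obtain ⟨h, -, hh⟩ := combinatorial_nullstellensatz_exists_linearCombination
    (fun i => (A i).image emb) (fun i => (hA i).image _) (φ f) (by
      intro x hx
      simp only [Finset.mem_image] at hx
      choose γ hγ hx using hx
      have e : (eval x) (φ f) = aeval (fun j => Polynomial.X * algebraMap K (Polynomial K)
          ((Fin.snoc γ (1 : K) : Fin (n+1) → K) j)) f := by
        have : ((eval x).comp (φ : MvPolynomial (Fin (n+1)) K →+* _)) =
          ((aeval (fun j => Polynomial.X * algebraMap K (Polynomial K)
          ((Fin.snoc γ (1 : K) : Fin (n+1) → K) j)) : MvPolynomial (Fin (n+1)) K →ₐ[K] _) :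
            MvPolynomial (Fin (n+1)) K →+* _) := by
          apply MvPolynomial.ringHom_ext
          · intro r
            simp [φ, MvPolynomial.algebraMap_eq, IsScalarTower.algebraMap_apply K (Polynomial K) (MvPolynomial (Fin n) (Polynomial K))]
          · intro i
            refine Fin.lastCases ?_ (fun i => ?_) i
            · simp [φ]
            · simp [φ, ← hx, emb]
        exact congrArg (fun F => F f) this
      rw [e, aux_scale f m hf, h0 γ hγ]
      simp)
  rw [← hψφ f, hh, Finsupp.linearCombination_apply, Finsupp.sum, map_sum]
  refine Ideal.sum_mem _ fun i _ => ?_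
  rw [smul_eq_mul, map_mul]
  refine Ideal.mul_mem_left _ _ (Ideal.subset_span ⟨i, ?_⟩)
  simp only
  rw [Finset.prod_image hemb.injOn, map_prod]
  refine Finset.prod_congr rfl fun γ _ => ?_
  simp [ψ, emb, MvPolynomial.algebraMap_eq]
  exact mul_comm _ _

open MvPolynomial in
/-- partial evaluation: send the first k variables t_i to γ_i u. -/
noncomputable def auxEv {K : Type*} [Field K] (n : ℕ) (γ : Fin n → K) (k : ℕ) :
    MvPolynomial (Fin (n + 1)) K →ₐ[K] MvPolynomial (Fin (n + 1)) K :=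
  aeval (Fin.snoc (α := fun _ => MvPolynomial (Fin (n + 1)) K)
    (fun i => if i.val < k then X (Fin.last n) * C (γ i) else X i.castSucc) (X (Fin.last n)))

noncomputable def auxP {K : Type*} [Field K] (n : ℕ) (γ : Fin n → K) (k : ℕ) :
    PrimeSpectrum (MvPolynomial (Fin (n + 1)) K) :=
  ⟨RingHom.ker (auxEv n γ k), RingHom.ker_isPrime _⟩

open MvPolynomial in
lemma auxP_lt {K : Type*} [Field K] (n : ℕ) (γ : Fin n → K) (k : ℕ) (hk : k < n) :
    auxP n γ k < auxP n γ (k + 1) := by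
  refine lt_of_le_of_ne ?_ ?_
  · intro f hf
    have hf : auxEv n γ k f = 0 := hf
    change auxEv n γ (k+1) f = 0
    have : (auxEv n γ (k+1)).comp (auxEv n γ k) = auxEv n γ (k+1) := by
      apply MvPolynomial.algHom_ext
      intro i
      refine Fin.lastCases ?_ (fun i => ?_) i
      · simp [auxEv]
      · by_cases hi : i.val < k
        · have : i.val < k + 1 := by omega
          simp only [auxEv, AlgHom.comp_apply, aeval_X, Fin.snoc_castSucc, hi, this, if_true,
            map_mul, Fin.snoc_last, algHom_C, MvPolynomial.algebraMap_eq]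
        · simp [auxEv, hi]
    rw [← this, AlgHom.comp_apply, hf, map_zero]
  · intro h
    have h1 : (X (Fin.castSucc ⟨k, hk⟩) - X (Fin.last n) * C (γ ⟨k, hk⟩)) ∈
        (auxP n γ (k+1)).asIdeal := by
      change auxEv n γ (k+1) _ = 0
      simp [auxEv, -Fin.castSucc_mk, MvPolynomial.algebraMap_eq]
    rw [← h] at h1
    have h1 : auxEv n γ k _ = 0 := h1
    simp only [auxEv, map_sub, map_mul, aeval_X, Fin.snoc_castSucc, Fin.snoc_last, lt_irrefl,
      if_false, algHom_C, MvPolynomial.algebraMap_eq] at h1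
    have := congrArg (eval (Fin.snoc (α := fun _ => K) (fun _ => (1 : K)) 0)) h1
    simp [-Fin.castSucc_mk] at this

lemma auxP_height {K : Type*} [Field K] (n : ℕ) (γ : Fin n → K) (k : ℕ) (hk : k ≤ n) :
    (k : ℕ∞) ≤ Order.height (auxP n γ k) := by
  induction k with
  | zero => simp
  | succ k ih =>
    have := Order.height_add_one_le (auxP_lt n γ k hk)
    push_cast
    exact le_trans (by gcongr; exact ih (by omega)) this

open MvPolynomial in
lemma auxP_le {K : Type*} [Field K] (n : ℕ) (γ : Fin n → K)
    (p : Ideal (MvPolynomial (Fin (n + 1)) K))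
    (hp : ∀ i : Fin n, X i.castSucc - X (Fin.last n) * C (γ i) ∈ p) :
    (auxP n γ n).asIdeal ≤ p := by
  intro f hf
  have hf : auxEv n γ n f = 0 := hf
  rw [← Ideal.Quotient.eq_zero_iff_mem]
  have : (Ideal.Quotient.mkₐ K p).comp (auxEv n γ n) = Ideal.Quotient.mkₐ K p := by
    apply MvPolynomial.algHom_ext
    intro i
    refine Fin.lastCases ?_ (fun i => ?_) i
    · simp [auxEv]
    · have := Ideal.Quotient.eq.mpr (hp i)
      simp [auxEv, this]
  have h2 := congrArg (fun F => F f) this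
  simp only [AlgHom.comp_apply, hf, map_zero] at h2
  exact h2.symm

theorem stmt_12 {K : Type*} [Field K] (n : ℕ) (A : Fin n → Finset K)
    (hA : ∀ i, (A i).Nonempty) :
    Ideal.span {f : MvPolynomial (Fin (n + 1)) K |
        (∃ m, f.IsHomogeneous m) ∧
          ∀ γ : Fin n → K, (∀ i, γ i ∈ A i) →
            MvPolynomial.eval (Fin.snoc γ (1 : K)) f = 0} =
      Ideal.span (Set.range fun i : Fin n =>
        ∏ γ ∈ A i,
          (MvPolynomial.X i.castSucc -
            MvPolynomial.X (Fin.last n) * MvPolynomial.C γ)) ∧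
    sInf {h : ℕ∞ | ∃ p : PrimeSpectrum (MvPolynomial (Fin (n + 1)) K),
        Ideal.span {f : MvPolynomial (Fin (n + 1)) K |
            (∃ m, f.IsHomogeneous m) ∧
              ∀ γ : Fin n → K, (∀ i, γ i ∈ A i) →
                MvPolynomial.eval (Fin.snoc γ (1 : K)) f = 0} ≤ p.asIdeal ∧
          h = Order.height p} = (n : ℕ∞) := by
  have hspan : Ideal.span {f : MvPolynomial (Fin (n + 1)) K |
        (∃ m, f.IsHomogeneous m) ∧
          ∀ γ : Fin n → K, (∀ i, γ i ∈ A i) →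
            MvPolynomial.eval (Fin.snoc γ (1 : K)) f = 0} =
      Ideal.span (Set.range fun i : Fin n =>
        ∏ γ ∈ A i,
          (MvPolynomial.X i.castSucc -
            MvPolynomial.X (Fin.last n) * MvPolynomial.C γ)) := by
    apply le_antisymm
    · rw [Ideal.span_le]
      rintro f ⟨⟨m, hm⟩, h0⟩
      exact aux_mem n A hA f m hm h0
    · apply Ideal.span_mono
      rintro _ ⟨i, rfl⟩
      refine ⟨⟨∑ γ ∈ A i, 1, MvPolynomial.IsHomogeneous.prod _ _ _ fun γ _ => ?_⟩, ?_⟩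
      · refine (MvPolynomial.isHomogeneous_X _ _).sub ?_
        simpa using (MvPolynomial.isHomogeneous_X K (Fin.last n)).mul
          (MvPolynomial.isHomogeneous_C _ γ)
      · intro γ hγ
        rw [map_prod]
        exact Finset.prod_eq_zero (hγ i) (by simp)
  refine ⟨hspan, ?_⟩
  have hne : Ideal.span {f : MvPolynomial (Fin (n + 1)) K |
        (∃ m, f.IsHomogeneous m) ∧
          ∀ γ : Fin n → K, (∀ i, γ i ∈ A i) →
            MvPolynomial.eval (Fin.snoc γ (1 : K)) f = 0} ≠ ⊤ := by
    choose γ hγ using hA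
    have hle : Ideal.span {f : MvPolynomial (Fin (n + 1)) K |
        (∃ m, f.IsHomogeneous m) ∧
          ∀ γ : Fin n → K, (∀ i, γ i ∈ A i) →
            MvPolynomial.eval (Fin.snoc γ (1 : K)) f = 0} ≤
        RingHom.ker (MvPolynomial.eval (Fin.snoc γ (1 : K) : Fin (n + 1) → K)) := by
      rw [Ideal.span_le]
      rintro f ⟨-, h0⟩
      exact h0 γ hγ
    intro htop
    rw [htop] at hle
    exact RingHom.ker_ne_top _ (top_le_iff.mp hle)
  rw [hspan] at hne ⊢
  apply le_antisymm
  · obtain ⟨p, hp⟩ := Ideal.nonempty_minimalPrimes hne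
    have hpp := hp.isPrime
    refine le_trans (b := Order.height (⟨p, hpp⟩ : PrimeSpectrum _))
      (sInf_le ⟨⟨p, hpp⟩, hp.1.2, rfl⟩) ?_
    rw [← PrimeSpectrum.height_eq_orderHeight]
    refine (Ideal.height_le_card_of_mem_minimalPrimes_span (Set.finite_range _) hp).trans ?_
    rw [Nat.cast_le, ← Set.image_univ]
    refine (Set.ncard_image_le Set.finite_univ).trans ?_
    simp [Set.ncard_univ]
  · apply le_sInf
    rintro _ ⟨p, hp, rfl⟩
    have hex : ∀ i : Fin n, ∃ γ : K, MvPolynomial.X i.castSucc -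
            MvPolynomial.X (Fin.last n) * MvPolynomial.C γ ∈ p.asIdeal := by
      intro i
      have h1 := hp (Ideal.subset_span ⟨i, rfl⟩)
      obtain ⟨γ, -, hγ⟩ := (p.isPrime.prod_mem_iff).mp h1
      exact ⟨γ, hγ⟩
    choose γ hγ using hex
    exact (auxP_height n γ n le_rfl).trans (Order.height_mono (auxP_le n γ _ hγ))
end

section
/- Let K be a field, A_1,...,A_n finite nonempty subsets of K with |A_i| = d_i, and Y ⊂ P^n the projective closure of X* = A_1 × ... × A_n. Then the Hilbert series of S[u]/I(Y) equals ∏_{i=1}^{n}(1 + t + ... + t^{d_i − 1}) / (1 − t). -/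
open Finset in
/-- Reduction of a power modulo the vanishing polynomial of a finite set. -/
lemma pow_reduce {K : Type*} [Field K] (A : Finset K) (k : ℕ) :
    ∃ c : ℕ → K, (∀ x ∈ A, x ^ k = ∑ j ∈ range A.card, c j * x ^ j) ∧ ∀ j, k < j → c j = 0 := by
  classical
  by_cases hk : k < A.card
  · refine ⟨fun j => if j = k then 1 else 0, fun x _ => ?_, fun j hj => if_neg (by omega)⟩
    simp [hk]
  · set q : Polynomial K := ∏ a ∈ A, (Polynomial.X - Polynomial.C a) with hq
    have hm : q.Monic := Polynomial.monic_prod_of_monic _ _ fun a _ => Polynomial.monic_X_sub_C a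
    have hdeg : q.degree = (A.card : ℕ) := by
      rw [hq, Polynomial.degree_prod]; simp
    have hlt : ((Polynomial.X ^ k : Polynomial K) %ₘ q).degree < (A.card : ℕ) := by
      rw [← hdeg]; exact Polynomial.degree_modByMonic_lt _ hm
    refine ⟨fun j => ((Polynomial.X ^ k : Polynomial K) %ₘ q).coeff j, fun x hx => ?_, fun j hj => ?_⟩
    · have h1 : q.eval x = 0 := by
        rw [hq, Polynomial.eval_prod]
        exact Finset.prod_eq_zero hx (by simp)
      have h2 := congrArg (Polynomial.eval x)
        (Polynomial.modByMonic_add_div (Polynomial.X ^ k : Polynomial K) q)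
      rw [Polynomial.eval_add, Polynomial.eval_mul, h1, zero_mul, add_zero] at h2
      simp only [Polynomial.eval_pow, Polynomial.eval_X] at h2
      rw [← h2]
      by_cases h0 : (Polynomial.X ^ k : Polynomial K) %ₘ q = 0
      · simp [h0]
      · exact Polynomial.eval_eq_sum_range' ((Polynomial.natDegree_lt_iff_degree_lt h0).2 hlt) x
    · exact Polynomial.coeff_eq_zero_of_degree_lt
        (hlt.trans_le (by exact_mod_cast (by omega : A.card ≤ j)))

/-- The points of the grid. -/
abbrev GridPt {K : Type*} {n : ℕ} (A : Fin n → Finset K) : Type _ :=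
  {γ : Fin n → K // ∀ i, γ i ∈ A i}

/-- Monomial functions on the grid. -/
def monoFun {K : Type*} [Field K] {n : ℕ} (A : Fin n → Finset K) (a : Fin n → ℕ) :
    GridPt A → K := fun γ => ∏ i, γ.1 i ^ a i

/-- Evaluation on the grid. -/
noncomputable def gridEv {K : Type*} [Field K] {n : ℕ} (A : Fin n → Finset K) :
    MvPolynomial (Fin (n + 1)) K →ₐ[K] (GridPt A → K) :=
  MvPolynomial.aeval fun i γ => (Fin.snoc γ.1 (1 : K) : Fin (n + 1) → K) i

lemma gridEv_apply {K : Type*} [Field K] {n : ℕ} (A : Fin n → Finset K)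
    (f : MvPolynomial (Fin (n + 1)) K) (γ : GridPt A) :
    gridEv A f γ = MvPolynomial.eval (Fin.snoc γ.1 (1 : K) : Fin (n + 1) → K) f := by
  induction f using MvPolynomial.induction_on with
  | C a => simp [gridEv]
  | add p q hp hq => simp [hp, hq]
  | mul_X p i hp => simp [hp]; left; simp [gridEv]

/-- The index set of reduced monomials of degree at most `d`. -/
def redIdx {K : Type*} {n : ℕ} (A : Fin n → Finset K) (d : ℕ) : Finset (Fin n → ℕ) :=
  (Fintype.piFinset fun i => Finset.range (A i).card).filter fun a => ∑ i, a i ≤ d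

lemma monoFun_mem_span {K : Type*} [Field K] {n : ℕ} (A : Fin n → Finset K) (d : ℕ)
    (a : Fin n → ℕ) (ha : ∑ i, a i ≤ d) :
    monoFun A a ∈ Submodule.span K (Set.range fun b : redIdx A d => monoFun A b.1) := by
  classical
  choose c hc hc0 using fun i => pow_reduce (A i) (a i)
  have key : monoFun A a = ∑ b ∈ Fintype.piFinset fun i => Finset.range (A i).card,
      (∏ i, c i (b i)) • monoFun A b := by
    funext γ
    simp only [monoFun, Finset.sum_apply, Pi.smul_apply, smul_eq_mul]
    rw [Finset.prod_congr rfl fun i _ => hc i _ (γ.2 i), Finset.prod_univ_sum]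
    simp only [Finset.prod_mul_distrib]
  rw [key]
  refine Submodule.sum_mem _ fun b hb => ?_
  by_cases h : ∀ i, b i ≤ a i
  · refine Submodule.smul_mem _ _ (Submodule.subset_span ⟨⟨b, ?_⟩, rfl⟩)
    exact Finset.mem_filter.2 ⟨hb, (Finset.sum_le_sum fun i _ => h i).trans ha⟩
  · push Not at h
    obtain ⟨i, hi⟩ := h
    rw [Finset.prod_eq_zero (Finset.mem_univ i) (hc0 i _ hi), zero_smul]
    exact Submodule.zero_mem _

lemma monoFun_linearIndependent {K : Type*} [Field K] {n : ℕ} (A : Fin n → Finset K) (d : ℕ) :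
    LinearIndependent K fun b : redIdx A d => monoFun A b.1 := by
  classical
  rw [Fintype.linearIndependent_iff]
  intro g hg b
  set P : MvPolynomial (Fin n) K :=
    ∑ b : redIdx A d, MvPolynomial.monomial (Finsupp.equivFunOnFinite.symm b.1) (g b) with hP
  have hinj : ∀ b b' : redIdx A d, Finsupp.equivFunOnFinite.symm b'.1 =
      Finsupp.equivFunOnFinite.symm b.1 ↔ b' = b := fun b b' => by
    rw [Equiv.apply_eq_iff_eq, Subtype.ext_iff]
  have hcoeff : P.coeff (Finsupp.equivFunOnFinite.symm b.1) = g b := by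
    rw [hP, MvPolynomial.coeff_sum]
    simp only [MvPolynomial.coeff_monomial, hinj]
    simp
  have hP0 : P = 0 := by
    refine MvPolynomial.eq_zero_of_eval_zero_at_prod_finset P A ?_ ?_
    · intro i
      have hb : ∀ b : redIdx A d, b.1 i < (A i).card := fun b =>
        Finset.mem_range.1 (Fintype.mem_piFinset.1 (Finset.mem_filter.1 b.2).1 i)
      have hpos : 0 < (A i).card := lt_of_le_of_lt (Nat.zero_le _) (hb b)
      rw [MvPolynomial.degreeOf_lt_iff hpos]
      intro m hm
      obtain ⟨b', -, h'⟩ := Finset.mem_biUnion.1 (MvPolynomial.support_sum hm)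
      have := MvPolynomial.support_monomial_subset h'
      rw [Finset.mem_singleton] at this
      rw [this]
      exact hb b'
    · intro x hx
      have := congrFun hg ⟨x, hx⟩
      simp only [Finset.sum_apply, Pi.smul_apply, smul_eq_mul, monoFun, Pi.zero_apply] at this
      rw [hP, map_sum, ← this]
      refine Finset.sum_congr rfl fun b _ => ?_
      rw [MvPolynomial.eval_monomial, Finsupp.prod_fintype _ _ (by simp)]
      rfl
  rw [← hcoeff, hP0, MvPolynomial.coeff_zero]

lemma gridEv_monomial {K : Type*} [Field K] {n : ℕ} (A : Fin n → Finset K)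
    (m : Fin (n + 1) →₀ ℕ) (r : K) :
    gridEv A (MvPolynomial.monomial m r) = r • monoFun A fun i => m i.castSucc := by
  funext γ
  rw [gridEv_apply, MvPolynomial.eval_monomial, Finsupp.prod_fintype _ _ (by simp),
    Fin.prod_univ_castSucc]
  simp [monoFun]

lemma map_gridEv {K : Type*} [Field K] {n : ℕ} (A : Fin n → Finset K) (d : ℕ) :
    (MvPolynomial.homogeneousSubmodule (Fin (n + 1)) K d).map (gridEv A).toLinearMap =
      Submodule.span K (Set.range fun b : redIdx A d => monoFun A b.1) := by
  classical
  apply le_antisymm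
  · rw [Submodule.map_le_iff_le_comap]
    intro f hf
    rw [Submodule.mem_comap, f.as_sum, map_sum]
    refine Submodule.sum_mem _ fun m hm => ?_
    rw [AlgHom.toLinearMap_apply, gridEv_monomial]
    refine Submodule.smul_mem _ _ (monoFun_mem_span A d _ ?_)
    have h1 : m.degree = d := by
      have := (MvPolynomial.mem_homogeneousSubmodule d f).1 hf
      have := this (MvPolynomial.mem_support_iff.1 hm)
      rw [Finsupp.degree_eq_weight_one]; exact this
    rw [Finsupp.degree_eq_sum, Fin.sum_univ_castSucc] at h1
    omega
  · rw [Submodule.span_le]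
    rintro _ ⟨b, rfl⟩
    have hb := (Finset.mem_filter.1 b.2).2
    refine ⟨MvPolynomial.monomial (Finsupp.equivFunOnFinite.symm
      (Fin.snoc b.1 (d - ∑ i, b.1 i) : Fin (n + 1) → ℕ)) 1, ?_, ?_⟩
    · refine MvPolynomial.isHomogeneous_monomial _ ?_
      rw [Finsupp.degree_eq_sum, Fin.sum_univ_castSucc]
      simp
      omega
    · rw [AlgHom.toLinearMap_apply, gridEv_monomial]
      simp

lemma finrank_map_congr {K V W U : Type*} [Field K] [AddCommGroup V] [Module K V]
    [AddCommGroup W] [Module K W] [AddCommGroup U] [Module K U]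
    (H : Submodule K V) (g : V →ₗ[K] W) (h : V →ₗ[K] U) (hgh : ∀ v ∈ H, g v = 0 ↔ h v = 0) :
    Module.finrank K (H.map g) = Module.finrank K (H.map h) := by
  have hk : LinearMap.ker (g.domRestrict H) = LinearMap.ker (h.domRestrict H) := by
    ext v
    simpa using hgh v.1 v.2
  rw [← LinearMap.range_domRestrict, ← LinearMap.range_domRestrict,
    ← (g.domRestrict H).quotKerEquivRange.finrank_eq,
    ← (h.domRestrict H).quotKerEquivRange.finrank_eq, hk]

lemma series_aux (s : ℕ) :
    (PowerSeries.mk fun d : ℕ => if s ≤ d then (1 : ℤ) else 0) * (1 - PowerSeries.X) =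
      PowerSeries.X ^ s := by
  ext d
  rw [mul_sub, mul_one, map_sub, PowerSeries.coeff_X_pow]
  cases d with
  | zero => simp [eq_comm]
  | succ d =>
    rw [PowerSeries.coeff_succ_mul_X, PowerSeries.coeff_mk, PowerSeries.coeff_mk]
    split_ifs <;> first | omega | simp


theorem stmt_13 {K : Type*} [Field K] (n : ℕ) (A : Fin n → Finset K)
    (hA : ∀ i, (A i).Nonempty)
    (I : Ideal (MvPolynomial (Fin (n + 1)) K))
    (hI : I = Ideal.span {f : MvPolynomial (Fin (n + 1)) K |
        (∃ m, f.IsHomogeneous m) ∧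
          ∀ γ : Fin n → K, (∀ i, γ i ∈ A i) →
            MvPolynomial.eval (Fin.snoc γ (1 : K)) f = 0}) :
    (PowerSeries.mk fun d : ℕ =>
        (Module.finrank K
          ((MvPolynomial.homogeneousSubmodule (Fin (n + 1)) K d).map
            (Ideal.Quotient.mkₐ K I).toLinearMap) : ℤ)) *
        (1 - PowerSeries.X) =
      ∏ i : Fin n, ∑ j ∈ Finset.range (A i).card, (PowerSeries.X : PowerSeries ℤ) ^ j := by
  classical
  have hrank : ∀ d, Module.finrank K
          ((MvPolynomial.homogeneousSubmodule (Fin (n + 1)) K d).map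
            (Ideal.Quotient.mkₐ K I).toLinearMap) = (redIdx A d).card := by
    intro d
    rw [finrank_map_congr _ _ (gridEv A).toLinearMap, map_gridEv,
      finrank_span_eq_card (monoFun_linearIndependent A d), Fintype.card_coe]
    intro f hf
    rw [AlgHom.toLinearMap_apply, AlgHom.toLinearMap_apply, Ideal.Quotient.mkₐ_eq_mk,
      Ideal.Quotient.eq_zero_iff_mem]
    constructor
    · intro hfI
      have hle : I ≤ RingHom.ker (gridEv A) := by
        rw [hI, Ideal.span_le]
        rintro p ⟨-, hp⟩
        rw [SetLike.mem_coe, RingHom.mem_ker]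
        funext γ
        rw [gridEv_apply]
        exact hp γ.1 γ.2
      exact (RingHom.mem_ker).1 (hle hfI)
    · intro h0
      rw [hI]
      refine Ideal.subset_span ⟨⟨d, hf⟩, fun γ hγ => ?_⟩
      have := congrFun h0 ⟨γ, hγ⟩
      rwa [gridEv_apply] at this
  simp only [hrank]
  rw [Finset.prod_univ_sum]
  have : (PowerSeries.mk fun d : ℕ => ((redIdx A d).card : ℤ)) =
      ∑ b ∈ Fintype.piFinset fun i => Finset.range (A i).card,
        PowerSeries.mk fun d : ℕ => if ∑ i, b i ≤ d then (1 : ℤ) else 0 := by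
    ext d
    rw [map_sum]
    simp only [PowerSeries.coeff_mk]
    rw [redIdx, Finset.card_filter]
    push_cast
    rfl
  rw [this, Finset.sum_mul]
  refine Finset.sum_congr rfl fun b _ => ?_
  rw [series_aux, Finset.prod_pow_eq_pow_sum]
end

section
/- Let K = F_q be a finite field with q ≥ 3, n ≥ 1, and X* = (K*)^n. For 1 ≤ d ≤ n(q−2) − 1, write d = k(q−2) + ℓ with k ≥ 0 and 1 ≤ ℓ ≤ q−2. Then the minimum distance of the evaluation code C_{X*}(d) equals (q−1)^{n−k−1}(q−1−ℓ); and for d ≥ n(q−2) the minimum distance is 1. -/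
namespace TorusCode
open MvPolynomial

/-- The support of a polynomial function on the torus. -/
noncomputable def supp {F : Type*} [Field F] [Fintype F] [DecidableEq F] {n : ℕ}
    (f : MvPolynomial (Fin n) F) : Finset (Fin n → F) :=
  Finset.univ.filter fun x : Fin n → F => (∀ i, x i ≠ 0) ∧ MvPolynomial.eval x f ≠ 0

/-- Nonzero elements. -/
def nz (F : Type*) [Field F] [Fintype F] [DecidableEq F] : Finset F :=
  Finset.univ.erase 0

section
variable {F : Type*} [Field F] [Fintype F] [DecidableEq F]

lemma card_nz : (nz F).card = Fintype.card F - 1 := by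
  simp [nz, Finset.card_univ]

lemma mem_nz {a : F} : a ∈ nz F ↔ a ≠ 0 := by simp [nz]

lemma exists_reduced {n : ℕ} (hm : 1 ≤ Fintype.card F - 1) (f : MvPolynomial (Fin n) F) :
    ∃ g : MvPolynomial (Fin n) F, g.totalDegree ≤ f.totalDegree ∧
      (∀ i, g.degreeOf i < (nz F).card) ∧
      ∀ x : Fin n → F, (∀ i, x i ≠ 0) → eval x g = eval x f := by
  classical
  set m := Fintype.card F - 1 with hmdef
  let r : (Fin n →₀ ℕ) → (Fin n →₀ ℕ) := fun e => e.mapRange (fun a => a % m) (by simp)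
  refine ⟨∑ e ∈ f.support, monomial (r e) (coeff e f), ?_, ?_, ?_⟩
  · apply totalDegree_finsetSum_le
    intro e he
    refine (totalDegree_monomial_le _ _).trans ?_
    refine le_trans ?_ (le_totalDegree he)
    rw [Finsupp.sum_fintype _ _ (by simp), Finsupp.sum_fintype _ _ (by simp)]
    apply Finset.sum_le_sum
    intro i _
    exact Nat.mod_le _ _
  · intro i
    rw [card_nz, ← hmdef]
    refine lt_of_le_of_lt (degreeOf_sum_le _ _ _) ?_
    rw [Finset.sup_lt_iff (by simp; omega)]
    intro e he
    rw [degreeOf_monomial_eq _ _ (by simpa using he)]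
    exact Nat.mod_lt _ hm
  · intro x hx
    rw [map_sum, eval_eq' x f]
    apply Finset.sum_congr rfl
    intro e he
    rw [eval_monomial, Finsupp.prod_fintype _ _ (by simp)]
    congr 1
    apply Finset.prod_congr rfl
    intro i _
    change x i ^ (e i % m) = _
    conv_rhs => rw [← Nat.mod_add_div (e i) m]
    rw [pow_add, pow_mul, FiniteField.pow_card_sub_one_eq_one _ (hx i)]
    simp

/-- Specialization of the first variable. -/
noncomputable def spec {n : ℕ} (a : F) (f : MvPolynomial (Fin (n+1)) F) : MvPolynomial (Fin n) F :=
  Polynomial.eval (C a) (finSuccEquiv F n f)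

lemma eval_spec {n : ℕ} (a : F) (f : MvPolynomial (Fin (n+1)) F) (x : Fin n → F) :
    eval x (spec a f) = eval (Fin.cons a x) f := by
  rw [spec, eval_eq_eval_mv_eval', Polynomial.eval_map]
  have := Polynomial.eval₂_at_apply (p := finSuccEquiv F n f) (eval x) (C a)
  rw [eval_C] at this
  exact this.symm

lemma totalDegree_spec {n : ℕ} (a : F) (f : MvPolynomial (Fin (n+1)) F) :
    (spec a f).totalDegree ≤ f.totalDegree := by
  rw [spec, Polynomial.eval_eq_sum, Polynomial.sum]
  apply totalDegree_finsetSum_le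
  intro i hi
  rw [← C_pow, mul_comm]
  refine (totalDegree_mul _ _).trans ?_
  rw [totalDegree_C, zero_add]
  have := totalDegree_coeff_finSuccEquiv_add_le f i (by simpa using hi)
  omega

lemma degreeOf_spec {n : ℕ} (a : F) (f : MvPolynomial (Fin (n+1)) F) (j : Fin n) :
    (spec a f).degreeOf j ≤ f.degreeOf j.succ := by
  rw [spec, Polynomial.eval_eq_sum, Polynomial.sum]
  refine (degreeOf_sum_le _ _ _).trans ?_
  apply Finset.sup_le
  intro i hi
  rw [← C_pow, mul_comm]
  exact (degreeOf_C_mul_le _ _ _).trans (degreeOf_coeff_finSuccEquiv f j i)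

lemma exists_factor {n : ℕ} (f : MvPolynomial (Fin (n+1)) F) (hf : f ≠ 0) (Z : Finset F)
    (hZ : ∀ a ∈ Z, spec a f = 0) :
    ∃ g : MvPolynomial (Fin (n+1)) F, g.totalDegree + Z.card = f.totalDegree ∧
      ∀ x : Fin (n+1) → F, eval x f = (∏ a ∈ Z, (x 0 - a)) * eval x g := by
  induction Z using Finset.induction_on generalizing f with
  | empty => exact ⟨f, by simp, by simp⟩
  | insert b Z hb ih =>
    have h0 : spec b f = 0 := hZ b (by simp)
    obtain ⟨G, hG⟩ := Polynomial.dvd_iff_isRoot.mpr (show Polynomial.IsRoot _ _ from h0)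
    set g := (finSuccEquiv F n).symm G with hg
    have hfg : f = (X 0 - C b) * g := by
      apply (finSuccEquiv F n).injective
      rw [hG, map_mul, map_sub, finSuccEquiv_X_zero, finSuccEquiv_apply _ _ (C b)]
      simp [hg]
    have hg0 : g ≠ 0 := by rintro h; apply hf; rw [hfg, h, mul_zero]
    have hX : (X 0 - C b : MvPolynomial (Fin (n+1)) F) ≠ 0 := by
      rintro h; apply hf; rw [hfg, h, zero_mul]
    have hdeg : (X 0 - C b : MvPolynomial (Fin (n+1)) F).totalDegree = 1 := by
      apply le_antisymm
      · refine (totalDegree_sub _ _).trans ?_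
        simp
      · have : (Finsupp.single (0 : Fin (n+1)) 1) ∈
            (X 0 - C b : MvPolynomial (Fin (n+1)) F).support := by
          have h : (0 : Fin (n+1) →₀ ℕ) ≠ Finsupp.single 0 1 := by
            intro h
            have := DFunLike.congr_fun h 0
            simp at this
          rw [mem_support_iff, coeff_sub, coeff_C, if_neg h, coeff_X']
          simp
        simpa using le_totalDegree this
    obtain ⟨g', h1, h2⟩ := ih g hg0 (by
      intro a ha
      have hs : spec a f = 0 := hZ a (by simp [ha])
      have hab : a - b ≠ 0 := by
        intro h; rw [sub_eq_zero] at h; exact hb (h ▸ ha)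
      have : spec a f = C (a - b) * spec a g := by
        rw [hfg]; simp only [spec]
        rw [map_mul, map_sub, finSuccEquiv_X_zero, finSuccEquiv_apply _ _ (C b)]
        simp
      rw [hs] at this
      rcases mul_eq_zero.mp this.symm with h | h
      · simp [hab] at h; exact absurd (by simpa [sub_eq_zero] using h) hab
      · exact h)
    refine ⟨g', ?_, ?_⟩
    · rw [Finset.card_insert_of_notMem hb, hfg, totalDegree_mul_of_isDomain hX hg0, hdeg]
      omega
    · intro x
      rw [hfg, map_mul, h2, Finset.prod_insert hb]
      simp [mul_assoc]

lemma arith1 (m t l : ℕ) (h1 : l ≤ t) (h2 : t + 1 ≤ m) : m - l ≤ (m - t) * (1 + (t - l)) := by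
  obtain ⟨b, rfl⟩ := Nat.exists_eq_add_of_le h1
  obtain ⟨a, rfl⟩ := Nat.exists_eq_add_of_le h2
  have e1 : l + b + 1 + a - l = b + 1 + a := by omega
  have e2 : l + b + 1 + a - (l + b) = 1 + a := by omega
  have e3 : l + b - l = b := by omega
  rw [e1, e2, e3]; nlinarith [Nat.zero_le (a*b)]

lemma arith2 (m t l : ℕ) (h1 : t ≤ l) (h2 : l ≤ m) : m * (m - l) ≤ (m - t) * (m - (l - t)) := by
  obtain ⟨b, rfl⟩ := Nat.exists_eq_add_of_le h1
  obtain ⟨a, rfl⟩ := Nat.exists_eq_add_of_le h2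
  have e1 : t + b + a - (t + b) = a := by omega
  have e2 : t + b + a - t = b + a := by omega
  have e3 : t + b + a - (t + b - t) = t + a := by omega
  rw [e1, e2, e3]; nlinarith [Nat.zero_le (t*b)]

lemma card_supp_ge {n : ℕ} (f : MvPolynomial (Fin (n+1)) F) (Y : Finset F) (hY : Y ⊆ nz F)
    (N : ℕ) (h : ∀ a ∈ Y, N ≤ (supp (spec a f)).card) : Y.card * N ≤ (supp f).card := by
  classical
  have hs : (Y.sigma fun a => supp (spec a f)).card ≤ (supp f).card := by
    apply Finset.card_le_card_of_injOn (fun p => (Fin.cons p.1 p.2 : Fin (n+1) → F))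
    · rintro ⟨a, x⟩ hp
      simp only [Finset.coe_sigma, Set.mem_sigma_iff, Finset.mem_coe, supp, Finset.mem_filter,
        Finset.mem_univ, true_and] at hp ⊢
      rw [← eval_spec]
      refine ⟨?_, hp.2.2⟩
      intro i
      refine Fin.cases ?_ ?_ i
      · simpa using mem_nz.mp (hY hp.1)
      · intro j; simpa using hp.2.1 j
    · rintro ⟨a, x⟩ _ ⟨b, y⟩ _ hxy
      have := Fin.cons_injective2 hxy
      obtain ⟨rfl, rfl⟩ := this
      rfl
  refine le_trans ?_ hs
  rw [Finset.card_sigma, ← smul_eq_mul]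
  exact Finset.card_nsmul_le_sum _ _ _ h

lemma lower (s : ℕ) (hs : 1 ≤ s) (hcard : Fintype.card F - 1 = s + 1) (n : ℕ) :
    ∀ k l : ℕ, k < n → l ≤ s → ∀ f : MvPolynomial (Fin n) F, f.totalDegree ≤ k * s + l →
      (supp f).Nonempty → (s+1) ^ (n - k - 1) * (s + 1 - l) ≤ (supp f).card := by
  induction n with
  | zero => intro k l hk; omega
  | succ n ih =>
    intro k l hk hl f₀ hdeg₀ hne₀
    obtain ⟨f, hd, hred, hev⟩ := exists_reduced (by omega) f₀
    have hsupp : supp f₀ = supp f := by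
      ext x
      simp only [supp, Finset.mem_filter, Finset.mem_univ, true_and]
      constructor
      · rintro ⟨h1, h2⟩; exact ⟨h1, by rwa [hev x h1]⟩
      · rintro ⟨h1, h2⟩; exact ⟨h1, by rwa [← hev x h1]⟩
    rw [hsupp] at hne₀ ⊢
    have hdeg := hd.trans hdeg₀
    obtain ⟨x, hx⟩ := hne₀
    simp only [supp, Finset.mem_filter, Finset.mem_univ, true_and] at hx
    have hf0 : f ≠ 0 := by rintro rfl; simp at hx
    classical
    set Z := (nz F).filter fun a => spec a f = 0 with hZ
    obtain ⟨g, hg1, hg2⟩ := exists_factor f hf0 Z (by intro a ha; simpa [hZ] using (Finset.mem_filter.mp ha).2)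
    set Y := (nz F).filter fun a => ¬ spec a f = 0 with hY
    have hYZ : Z.card + Y.card = s + 1 := by
      rw [hZ, hY, Finset.card_filter_add_card_filter_not, card_nz, hcard]
    have hYne : x 0 ∈ Y := by
      rw [hY, Finset.mem_filter]
      refine ⟨mem_nz.mpr (hx.1 0), ?_⟩
      intro h
      apply hx.2
      have := eval_spec (x 0) f (Fin.tail x)
      rw [h, Fin.cons_self_tail] at this
      simpa using this.symm
    have hYpos : 1 ≤ Y.card := Finset.card_pos.mpr ⟨_, hYne⟩
    -- nonvanishing of the slices
    have hsl : ∀ a ∈ Y, (supp (spec a f)).Nonempty ∧ supp (spec a f) = supp (spec a g) := by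
      intro a ha
      rw [hY, Finset.mem_filter] at ha
      constructor
      · by_contra hcon
        apply ha.2
        apply eq_zero_of_eval_zero_at_prod_finset (spec a f) (fun _ => nz F)
        · intro i
          exact (degreeOf_spec a f i).trans_lt (hred _)
        · intro y hy
          by_contra hy2
          apply hcon
          refine ⟨y, ?_⟩
          simp only [supp, Finset.mem_filter, Finset.mem_univ, true_and]
          exact ⟨fun i => mem_nz.mp (hy i), hy2⟩
      · have hp : (∏ b ∈ Z, (a - b)) ≠ 0 := by
          rw [Finset.prod_ne_zero_iff]
          intro b hb h
          rw [sub_eq_zero] at h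
          subst h
          exact ha.2 (Finset.mem_filter.mp hb).2
        ext y
        simp only [supp, Finset.mem_filter, Finset.mem_univ, true_and, eval_spec, hg2,
          Fin.cons_zero]
        simp [hp]
    have hgd : ∀ a, (spec a g).totalDegree + Z.card ≤ k * s + l := by
      intro a
      have := totalDegree_spec a g
      omega
    set t := Z.card with ht
    have hYc : Y.card = s + 1 - t := by omega
    have key : ∀ N, (∀ a ∈ Y, N ≤ (supp (spec a g)).card) → (s + 1 - t) * N ≤ (supp f).card := by
      intro N hN
      rw [← hYc]
      apply card_supp_ge f Y (Finset.filter_subset _ _)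
      intro a ha
      rw [(hsl a ha).2]; exact hN a ha
    have hgne : ∀ a ∈ Y, (supp (spec a g)).Nonempty := fun a ha => (hsl a ha).2 ▸ (hsl a ha).1
    rcases le_or_gt t l with htl | htl
    · rcases Nat.lt_or_ge k n with hkn | hkn
      · have := key ((s+1)^(n-k-1) * (s + 1 - (l - t))) (by
          intro a ha
          apply ih k (l - t) hkn (by omega) _ _ (hgne a ha)
          have := hgd a
          omega)
        refine le_trans ?_ this
        have e : n + 1 - k - 1 = (n - k - 1) + 1 := by omega
        rw [e, pow_succ]
        have h2 := Nat.mul_le_mul_left ((s+1)^(n-k-1)) (arith2 (s+1) t l htl (by omega))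
        calc _ = _ := by ring
          _ ≤ _ := h2
          _ = _ := by ring
      · have := key 1 (fun a ha => Finset.card_pos.mpr (hgne a ha))
        have e : n + 1 - k - 1 = 0 := by omega
        rw [e, pow_zero]
        omega
    · have hk0 : 1 ≤ k := by
        by_contra h
        have hk0 : k = 0 := by omega
        have := hgd 0
        rw [hk0] at this
        omega
      obtain ⟨j, rfl⟩ := Nat.exists_eq_add_of_le' hk0
      have := key ((s+1)^(n-j-1) * (s + 1 - (s + l - t))) (by
          intro a ha
          apply ih j (s + l - t) (by omega) (by omega) _ _ (hgne a ha)
          have := hgd a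
          rw [add_mul] at this
          omega)
      refine le_trans ?_ this
      have e : n + 1 - (j + 1) - 1 = n - j - 1 := by omega
      have e2 : s + 1 - (s + l - t) = 1 + (t - l) := by omega
      rw [e, e2]
      have h2 := Nat.mul_le_mul_left ((s+1)^(n-j-1)) (arith1 (s+1) t l htl.le (by omega))
      calc _ ≤ _ := h2
          _ = _ := by ring

lemma upper {n : ℕ} (c : Fin n → ℕ) (hc : ∀ i, c i ≤ Fintype.card F - 1) :
    ∃ f : MvPolynomial (Fin n) F, f.totalDegree ≤ ∑ i, c i ∧
      (supp f).card = ∏ i, (Fintype.card F - 1 - c i) := by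
  classical
  have hT : ∀ i, ∃ T ⊆ nz F, T.card = c i := fun i =>
    Finset.exists_subset_card_eq (by rw [card_nz]; exact hc i)
  choose T hT1 hT2 using hT
  refine ⟨∏ i, ∏ a ∈ T i, (X i - C a), ?_, ?_⟩
  · refine (totalDegree_finsetProd _ _).trans ?_
    apply Finset.sum_le_sum
    intro i _
    refine (totalDegree_finsetProd _ _).trans ?_
    rw [← hT2 i, Finset.card_eq_sum_ones]
    apply Finset.sum_le_sum
    intro a _
    refine (totalDegree_sub _ _).trans ?_
    simp
  · have : supp (∏ i, ∏ a ∈ T i, (X i - C a : MvPolynomial (Fin n) F)) =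
        Fintype.piFinset fun i => nz F \ T i := by
      ext x
      simp only [supp, Finset.mem_filter, Finset.mem_univ, true_and, Fintype.mem_piFinset,
        Finset.mem_sdiff, mem_nz, map_prod, Finset.prod_ne_zero_iff, forall_true_left, map_sub,
        eval_X, eval_C, sub_ne_zero]
      constructor
      · rintro ⟨h1, h2⟩ i
        exact ⟨h1 i, fun h => h2 i _ h rfl⟩
      · intro h
        exact ⟨fun i => (h i).1, fun i a ha e => (h i).2 (e ▸ ha)⟩
    rw [this, Fintype.card_piFinset]
    apply Finset.prod_congr rfl
    intro i _
    rw [Finset.card_sdiff_of_subset (hT1 i), card_nz, hT2]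

end
end TorusCode


theorem stmt_17 {F : Type*} [Field F] [Fintype F] [DecidableEq F]
    (q : ℕ) (hq : q = Fintype.card F) (hq3 : 3 ≤ q) (n : ℕ) (hn : 1 ≤ n) :
    (∀ d k ℓ : ℕ, 1 ≤ d → d ≤ n * (q - 2) - 1 →
      d = k * (q - 2) + ℓ → 1 ≤ ℓ → ℓ ≤ q - 2 →
      IsLeast
        {w : ℕ | ∃ f : MvPolynomial (Fin n) F, f.totalDegree ≤ d ∧
          (∃ x : Fin n → F, (∀ i, x i ≠ 0) ∧ MvPolynomial.eval x f ≠ 0) ∧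
          w = (Finset.univ.filter fun x : Fin n → F =>
            (∀ i, x i ≠ 0) ∧ MvPolynomial.eval x f ≠ 0).card}
        ((q - 1) ^ (n - k - 1) * (q - 1 - ℓ))) ∧
    (∀ d : ℕ, n * (q - 2) ≤ d →
      IsLeast
        {w : ℕ | ∃ f : MvPolynomial (Fin n) F, f.totalDegree ≤ d ∧
          (∃ x : Fin n → F, (∀ i, x i ≠ 0) ∧ MvPolynomial.eval x f ≠ 0) ∧
          w = (Finset.univ.filter fun x : Fin n → F =>
            (∀ i, x i ≠ 0) ∧ MvPolynomial.eval x f ≠ 0).card}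
        1) := by

  have hne : ∀ f : MvPolynomial (Fin n) F,
      (∃ x : Fin n → F, (∀ i, x i ≠ 0) ∧ MvPolynomial.eval x f ≠ 0) ↔
        (TorusCode.supp f).Nonempty := by
    intro f
    simp [TorusCode.supp, Finset.Nonempty]
  obtain ⟨s, rfl⟩ : ∃ s, q = s + 2 := ⟨q - 2, by omega⟩
  have hcard : Fintype.card F - 1 = s + 1 := by omega
  have hs2 : s + 2 - 2 = s := by omega
  have hs1 : s + 2 - 1 = s + 1 := by omega
  rw [hs2, hs1]
  constructor
  · intro d k l hd1 hd2 hd hl1 hl2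
    have hkn : k < n := by
      by_contra h
      have := Nat.mul_le_mul_right s (not_lt.mp h)
      omega
    constructor
    · obtain ⟨f, hf1, hf2⟩ := TorusCode.upper (F := F) (n := n)
        (fun i => if (i : ℕ) < k then s else if (i : ℕ) = k then l else 0)
        (by intro i; split_ifs <;> omega)
      obtain ⟨r, rfl⟩ : ∃ r, n = k + 1 + r := ⟨n - k - 1, by omega⟩
      have hsum : (∑ i : Fin (k + 1 + r),
          (if (i : ℕ) < k then s else if (i : ℕ) = k then l else 0)) = k * s + l := by
        have h3 : ∀ i : Fin r, ¬ (k + 1 + (i : ℕ) < k) := fun i => by omega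
        have h4 : ∀ i : Fin r, ¬ (k + 1 + (i : ℕ) = k) := fun i => by omega
        rw [Fin.sum_univ_add, Fin.sum_univ_castSucc]
        simp [h3, h4]
      have hprod : (∏ i : Fin (k + 1 + r), (Fintype.card F - 1 -
          (if (i : ℕ) < k then s else if (i : ℕ) = k then l else 0))) =
          (s + 1) ^ r * (s + 1 - l) := by
        rw [Fin.prod_univ_add, Fin.prod_univ_castSucc, hcard]
        have h3 : ∀ i : Fin r, ¬ (k + 1 + (i : ℕ) < k) := fun i => by omega
        have h4 : ∀ i : Fin r, ¬ (k + 1 + (i : ℕ) = k) := fun i => by omega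
        simp [h3, h4, mul_comm]
      have e : k + 1 + r - k - 1 = r := by omega
      rw [hprod] at hf2
      rw [hsum] at hf1
      rw [e]
      refine ⟨f, hd ▸ hf1, ?_, hf2.symm⟩
      rw [hne, ← Finset.card_pos, hf2]
      have : 0 < s + 1 - l := by omega
      positivity
    · rintro w ⟨f, hf1, hf2, rfl⟩
      exact TorusCode.lower s (by omega) hcard n k l hkn hl2 f (hd ▸ hf1) ((hne f).mp hf2)
  · intro d hd
    constructor
    · obtain ⟨f, hf1, hf2⟩ := TorusCode.upper (F := F) (n := n) (fun _ => s)
        (by intro i; omega)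
      have hf3 : (TorusCode.supp f).card = 1 := by
        rw [hf2, hcard]; simp
      refine ⟨f, ?_, ?_, hf3.symm⟩
      · refine hf1.trans ?_
        simpa using hd
      · rw [hne, ← Finset.card_pos, hf3]; exact one_pos
    · rintro w ⟨f, hf1, hf2, rfl⟩
      exact Finset.card_pos.mpr ((hne f).mp hf2)
end

section
/- Let K = F_q be a finite field, n ≥ 1, and X* = K^n = A^n. For 1 ≤ d ≤ n(q−1) − 1, write d = k(q−1) + ℓ with k ≥ 0 and 1 ≤ ℓ ≤ q−1. Then the minimum distance of the generalized Reed–Muller code C_{X*}(d) equals (q−ℓ) q^{n−k−1}; and for d ≥ n(q−1) the minimum distance is 1. -/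
open MvPolynomial in
/-- A product of linear forms with prescribed number of zeros in each coordinate. -/
lemma grm_exists {F : Type*} [Field F] [Fintype F] [DecidableEq F] (n : ℕ) (a : Fin n → ℕ)
    (ha : ∀ i, a i + 1 ≤ Fintype.card F) :
    ∃ f : MvPolynomial (Fin n) F, f.totalDegree ≤ ∑ i, a i ∧
      (∃ x : Fin n → F, eval x f ≠ 0) ∧
      (∏ i, (Fintype.card F - a i)) =
        (Finset.univ.filter fun x : Fin n → F => eval x f ≠ 0).card := by
  have hS : ∀ i, ∃ S : Finset F, S.card = a i := fun i => by
    obtain ⟨S, -, hS⟩ := Finset.exists_subset_card_eq (s := (Finset.univ : Finset F)) (n := a i)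
      (by rw [Finset.card_univ]; have := ha i; omega)
    exact ⟨S, hS⟩
  choose S hS using hS
  set f : MvPolynomial (Fin n) F := ∏ i, ∏ b ∈ S i, (X i - C b) with hf
  have hev : ∀ x : Fin n → F, eval x f ≠ 0 ↔ ∀ i, x i ∈ (S i)ᶜ := by
    intro x
    simp only [hf, map_prod, map_sub, eval_X, eval_C, Finset.prod_ne_zero_iff, Finset.mem_univ,
      true_imp_iff, Finset.mem_compl, sub_ne_zero]
    exact forall_congr' fun i => ⟨fun h hx => h _ hx rfl, fun h b hb e => h (e ▸ hb)⟩
  have hset : (Finset.univ.filter fun x : Fin n → F => eval x f ≠ 0) =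
      Fintype.piFinset fun i => (S i)ᶜ := by
    ext x; simp only [Finset.mem_filter, Finset.mem_univ, true_and, Fintype.mem_piFinset, hev]
  have hcard : (∏ i, (Fintype.card F - a i)) =
        (Finset.univ.filter fun x : Fin n → F => eval x f ≠ 0).card := by
    rw [hset, Fintype.card_piFinset]
    simp [Finset.card_compl, hS]
  refine ⟨f, ?_, ?_, hcard⟩
  · refine (totalDegree_finsetProd _ _).trans (Finset.sum_le_sum fun i _ => ?_)
    refine (totalDegree_finsetProd _ _).trans ?_
    rw [← hS i, Finset.card_eq_sum_ones]
    refine Finset.sum_le_sum fun b _ => ?_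
    refine (totalDegree_sub_C_le _ _).trans ?_
    simp
  · have hpos : 0 < (Finset.univ.filter fun x : Fin n → F => eval x f ≠ 0).card := by
      rw [← hcard]
      exact Finset.prod_pos fun i _ => by have := ha i; omega
    obtain ⟨x, hx⟩ := Finset.card_pos.1 hpos
    exact ⟨x, (Finset.mem_filter.1 hx).2⟩

/-- Exponent reduction. -/
lemma grm_red {F : Type*} [Field F] [Fintype F] (m : ℕ) :
    ∃ r : ℕ, r ≤ m ∧ r + 1 ≤ Fintype.card F ∧ ∀ x : F, x ^ r = x ^ m := by
  induction m using Nat.strong_induction_on with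
  | _ m ih =>
    have hq : 1 < Fintype.card F := Fintype.one_lt_card
    by_cases h : m + 1 ≤ Fintype.card F
    · exact ⟨m, le_rfl, h, fun _ => rfl⟩
    · obtain ⟨r, h1, h2, h3⟩ := ih (m - Fintype.card F + 1) (by omega)
      refine ⟨r, by omega, h2, fun x => ?_⟩
      rw [h3, pow_succ]
      obtain ⟨e, he⟩ := Nat.exists_eq_add_of_le (show Fintype.card F ≤ m by omega)
      have : m - Fintype.card F = e := by omega
      rw [this, he, pow_add, FiniteField.pow_card, mul_comm]

open MvPolynomial in
lemma grm_reduce {F : Type*} [Field F] [Fintype F] (n d : ℕ) (f : MvPolynomial (Fin n) F)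
    (hf : f.totalDegree ≤ d) :
    ∃ g : MvPolynomial (Fin n) F, (∀ x, eval x g = eval x f) ∧
      ∀ s ∈ g.support, (∀ i, s i + 1 ≤ Fintype.card F) ∧ ∑ i, s i ≤ d := by
  classical
  choose r h1 h2 h3 using grm_red (F := F)
  let ρ : (Fin n →₀ ℕ) → (Fin n →₀ ℕ) := fun s => Finsupp.equivFunOnFinite.symm fun i => r (s i)
  refine ⟨∑ s ∈ f.support, monomial (ρ s) (coeff s f), fun x => ?_, fun s hs => ?_⟩
  · rw [map_sum, eval_eq']
    refine Finset.sum_congr rfl fun s _ => ?_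
    rw [eval_monomial, Finsupp.prod_fintype _ _ (by simp)]
    simp [ρ, h3]
  · have := support_sum hs
    obtain ⟨t, ht, hst⟩ := Finset.mem_biUnion.1 this
    have : s = ρ t := by
      have := support_monomial_subset hst
      simpa using this
    subst this
    refine ⟨fun i => by simpa [ρ] using h2 _, ?_⟩
    have htd := (le_totalDegree ht).trans hf
    rw [Finsupp.sum_fintype _ _ (by simp)] at htd
    refine le_trans (Finset.sum_le_sum fun i _ => ?_) htd
    simpa [ρ] using h1 _

open MvPolynomial in
lemma grm_footprint {F : Type*} [Field F] [Fintype F] [DecidableEq F] (n : ℕ) :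
    ∀ g : MvPolynomial (Fin n) F, g ≠ 0 → ∃ s ∈ g.support,
      ∏ i, (Fintype.card F - s i) ≤
        (Finset.univ.filter fun x : Fin n → F => eval x g ≠ 0).card := by
  induction n with
  | zero =>
    intro g hg
    obtain ⟨s, hs⟩ := Finset.nonempty_iff_ne_empty.2 (mt support_eq_empty.1 hg)
    refine ⟨s, hs, ?_⟩
    rw [Finset.univ_eq_empty, Finset.prod_empty, Nat.one_le_iff_ne_zero, ← Nat.pos_iff_ne_zero, Finset.card_pos]
    refine ⟨Fin.elim0, ?_⟩
    rw [Finset.mem_filter]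
    refine ⟨Finset.mem_univ _, ?_⟩
    rw [eq_C_of_isEmpty g, eval_C]
    rw [Subsingleton.elim 0 s]
    exact mem_support_iff.1 hs
  | succ n ih =>
    intro g hg
    set P := finSuccEquiv F n g with hP
    have hP0 : P ≠ 0 := by simpa [hP] using hg
    obtain ⟨s, hs, hle⟩ := ih P.leadingCoeff (Polynomial.leadingCoeff_ne_zero.2 hP0)
    refine ⟨s.cons P.natDegree, ?_, ?_⟩
    · rw [mem_support_iff, ← finSuccEquiv_coeff_coeff]
      exact mem_support_iff.1 hs
    · rw [Fin.prod_univ_succ]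
      simp only [Finsupp.cons_zero, Finsupp.cons_succ]
      set T := Finset.univ.filter fun y : Fin n → F => eval y P.leadingCoeff ≠ 0 with hT
      have key : (Fintype.card F - P.natDegree) * T.card ≤
          (Finset.univ.filter fun x : Fin (n+1) → F => eval x g ≠ 0).card := by
        have h1 := Finset.mul_card_image_le_card_of_maps_to
          (s := Finset.univ.filter fun x : Fin (n+1) → F => eval x g ≠ 0 ∧ Fin.tail x ∈ T)
          (f := fun x => (Fin.tail x : Fin n → F)) (t := T)
          (fun x hx => (Finset.mem_filter.1 hx).2.2) (Fintype.card F - P.natDegree) ?_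
        · refine h1.trans (Finset.card_le_card fun x hx => ?_)
          simp only [Finset.mem_filter, Finset.mem_univ, true_and] at hx ⊢
          exact hx.1
        · intro y hy
          have hy' : eval y P.leadingCoeff ≠ 0 := (Finset.mem_filter.1 hy).2
          set R : Polynomial F := P.map (eval y) with hR
          have hR0 : R ≠ 0 := by
            intro h
            apply hy'
            have := congrArg (fun p => Polynomial.coeff p P.natDegree) h
            simpa [hR, Polynomial.coeff_map] using this
          have hdeg : R.roots.toFinset.card ≤ P.natDegree :=
            (Multiset.toFinset_card_le _).trans
              ((Polynomial.card_roots' _).trans Polynomial.natDegree_map_le)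
          have hinj : Function.Injective fun t : F => (Fin.cons t y : Fin (n+1) → F) := by
            intro t u h
            simpa using congrFun h 0
          calc Fintype.card F - P.natDegree ≤ (R.roots.toFinsetᶜ).card := by
                rw [Finset.card_compl]; omega
            _ = ((R.roots.toFinsetᶜ).image fun t : F => (Fin.cons t y : Fin (n+1) → F)).card :=
                (Finset.card_image_of_injective _ hinj).symm
            _ ≤ _ := by
                refine Finset.card_le_card fun x hx => ?_
                obtain ⟨t, ht, rfl⟩ := Finset.mem_image.1 hx
                simp only [Finset.mem_filter, Finset.mem_univ, true_and, Fin.tail_cons]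
                refine ⟨⟨?_, hy⟩, trivial⟩
                rw [eval_eq_eval_mv_eval', ← hP, ← hR]
                intro h
                apply Finset.mem_compl.1 ht
                rw [Multiset.mem_toFinset, Polynomial.mem_roots hR0]
                exact h
      exact (Nat.mul_le_mul_left _ hle).trans key

lemma grm_prod (Q : ℕ) : ∀ (n k l : ℕ) (a : Fin n → ℕ), (∀ i, a i ≤ Q) → k < n → l ≤ Q →
    ∑ i, a i ≤ k * Q + l → (Q + 1 - l) * (Q + 1) ^ (n - k - 1) ≤ ∏ i, (Q + 1 - a i) := by
  intro n
  induction n with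
  | zero => intro k l a _ h; omega
  | succ n ih =>
    intro k l a ha hk hl hsum
    rw [Fin.prod_univ_succ]
    rw [Fin.sum_univ_succ] at hsum
    have h0 := ha 0
    have hpos : 1 ≤ ∏ i : Fin n, (Q + 1 - a i.succ) :=
      Finset.prod_pos fun (i : Fin n) _ => Nat.sub_pos_of_lt (Nat.lt_succ_of_le (ha i.succ))
    generalize a 0 = s at *
    by_cases hs : s ≤ l
    · by_cases hkn : k < n
      · have := ih k (l - s) (fun i => a i.succ) (fun i => ha _) hkn (by omega) (by omega)
        refine le_trans ?_ (Nat.mul_le_mul_left _ this)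
        rw [show n + 1 - k - 1 = (n - k - 1) + 1 by omega, pow_succ, mul_comm (_ ^ _), ← mul_assoc,
          ← mul_assoc]
        refine Nat.mul_le_mul_right _ ?_
        obtain ⟨u, rfl⟩ := Nat.exists_eq_add_of_le hs
        obtain ⟨v, rfl⟩ := Nat.exists_eq_add_of_le hl
        rw [show s + u + v + 1 - (s + u) = v + 1 by omega, show s + u - s = u by omega,
          show s + u + v + 1 - s = u + v + 1 by omega, show s + u + v + 1 - u = s + v + 1 by omega]
        nlinarith [Nat.zero_le (s * u)]
      · rw [show n + 1 - k - 1 = 0 by omega, pow_zero]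
        exact Nat.mul_le_mul (by omega) hpos
    · obtain _ | k := k
      · omega
      have := ih k (Q + l - s) (fun i => a i.succ) (fun i => ha _) (by omega) (by omega)
        (by rw [Nat.succ_mul] at hsum; omega)
      refine le_trans ?_ (Nat.mul_le_mul_left _ this)
      rw [show n + 1 - (k + 1) - 1 = n - k - 1 by omega, ← mul_assoc]
      refine Nat.mul_le_mul_right _ ?_
      obtain ⟨u, rfl⟩ := Nat.exists_eq_add_of_le (not_le.1 hs).le
      obtain ⟨v, rfl⟩ := Nat.exists_eq_add_of_le h0
      rw [show l + u + v + 1 - l = u + v + 1 by omega,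
          show l + u + v + 1 - (l + u) = v + 1 by omega,
          show l + u + v + 1 - (l + u + v + l - (l + u)) = u + 1 by omega]
      nlinarith [Nat.zero_le (v * u)]

theorem stmt_18 {F : Type*} [Field F] [Fintype F] [DecidableEq F]
    (q : ℕ) (hq : q = Fintype.card F) (n : ℕ) (hn : 1 ≤ n) :
    (∀ d k ℓ : ℕ, 1 ≤ d → d ≤ n * (q - 1) - 1 →
      d = k * (q - 1) + ℓ → 1 ≤ ℓ → ℓ ≤ q - 1 →
      IsLeast
        {w : ℕ | ∃ f : MvPolynomial (Fin n) F, f.totalDegree ≤ d ∧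
          (∃ x : Fin n → F, MvPolynomial.eval x f ≠ 0) ∧
          w = (Finset.univ.filter fun x : Fin n → F =>
            MvPolynomial.eval x f ≠ 0).card}
        ((q - ℓ) * q ^ (n - k - 1))) ∧
    (∀ d : ℕ, n * (q - 1) ≤ d →
      IsLeast
        {w : ℕ | ∃ f : MvPolynomial (Fin n) F, f.totalDegree ≤ d ∧
          (∃ x : Fin n → F, MvPolynomial.eval x f ≠ 0) ∧
          w = (Finset.univ.filter fun x : Fin n → F =>
            MvPolynomial.eval x f ≠ 0).card}
        1) := by
  have hq1 : 1 < Fintype.card F := Fintype.one_lt_card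
  rw [← hq] at hq1
  constructor
  · intro d k l hd hdn hdk hl1 hl
    have hkn : k < n := by
      by_contra h
      have := Nat.mul_le_mul_right (q - 1) (not_lt.1 h)
      omega
    constructor
    · obtain ⟨f, h1, h2, h3⟩ := grm_exists (F := F) n
        (fun i => if (i : ℕ) < k then q - 1 else if (i : ℕ) = k then l else 0)
        (fun i => by rw [← hq]; split_ifs <;> omega)
      refine ⟨f, h1.trans (le_of_eq ?_), h2, ?_⟩
      · rw [Fin.sum_univ_eq_sum_range
          (fun i => if i < k then q - 1 else if i = k then l else 0) n]
        obtain ⟨m, rfl⟩ := Nat.exists_eq_add_of_lt hkn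
        rw [show k + m + 1 = k + (m + 1) by omega, Finset.sum_range_add,
          Finset.sum_range_succ' _ m, Finset.sum_congr rfl (g := fun _ => q - 1)]
        · simp [hdk]
        · intro i hi; simp [Finset.mem_range.1 hi]
      · rw [← h3, ← hq, Fin.prod_univ_eq_prod_range
          (fun i => q - if i < k then q - 1 else if i = k then l else 0) n]
        obtain ⟨m, rfl⟩ := Nat.exists_eq_add_of_lt hkn
        rw [show k + m + 1 = k + (m + 1) by omega, Finset.prod_range_add,
          Finset.prod_range_succ' _ m, Finset.prod_congr rfl (g := fun _ => 1)]
        · simp [mul_comm]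
        · intro i hi; simp [Finset.mem_range.1 hi]; omega
    · rintro w ⟨f, hf, ⟨x, hx⟩, rfl⟩
      obtain ⟨g, hg, hgs⟩ := grm_reduce n d f hf
      obtain ⟨s, hs, hle⟩ := grm_footprint n g (by
        rintro rfl
        exact hx (by rw [← hg]; simp))
      obtain ⟨h1, h2⟩ := hgs s hs
      simp only [hg, ← hq] at hle h1
      refine le_trans ?_ hle
      have := grm_prod (q - 1) n k l s (fun i => by have := h1 i; omega) hkn hl (by omega)
      rwa [show q - 1 + 1 = q by omega] at this
  · intro d hd
    constructor
    · obtain ⟨f, h1, h2, h3⟩ := grm_exists (F := F) n (fun i => q - 1) (fun i => by omega)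
      refine ⟨f, h1.trans (by simpa using hd), h2, ?_⟩
      rw [← h3, ← hq, show q - (q - 1) = 1 by omega]
      simp
    · rintro w ⟨f, hf, ⟨x, hx⟩, rfl⟩
      exact Finset.card_pos.2 ⟨x, by simpa using hx⟩
end
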